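/- Let p be a prime and let G be a finite p-group of maximal class with cd(G) = {1, p, p^b} for some integer b ≥ 2. If |G| = p^n, then cod(G) = {p^i | 0 ≤ i ≤ c} for some integer c with n - b ≤ c ≤ n - 2. -/

import Mathlib

open CategoryTheory

/-- The degree of a complex representation: the dimension of the underlying vector space. -/
noncomputable def repDegree {G : Type} [Group G] (V : FDRep ℂ G) : ℕ :=
  Module.finrank ℂ V

/-- The kernel of a representation of `G`, as a subgroup of `G`. -/
noncomputable def repKer {G : Type} [Group G] (V : FDRep ℂ G) : Subgroup G :=
  MonoidHom.ker (Representation.asGroupHom V.ρ)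

/-- The codegree of a character: `|G : ker χ| / χ(1)`. -/
noncomputable def codegree {G : Type} [Group G] (V : FDRep ℂ G) : ℕ :=
  (repKer V).index / repDegree V

/-- `cod(G)`: the set of codegrees of the irreducible complex characters of `G`. -/
def codSet (G : Type) [Group G] : Set ℕ :=
  {m | ∃ V : FDRep ℂ G, Simple V ∧ codegree V = m}

/-- `cd(G)`: the set of degrees of the irreducible complex characters of `G`. -/
def cdSet (G : Type) [Group G] : Set ℕ :=
  {m | ∃ V : FDRep ℂ G, Simple V ∧ repDegree V = m}

/-- The nilpotency class of `G`: the least `n` with `upperCentralSeries G n = ⊤`. -/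
noncomputable def nilClass (G : Type) [Group G] : ℕ :=
  sInf {n | upperCentralSeries G n = ⊤}

open scoped Classical in
/-- The character of `G` induced from the linear character `lam` of the subgroup `H`. -/
noncomputable def indLinearChar {G : Type} [Group G] [Fintype G] (H : Subgroup G)
    (lam : H →* ℂˣ) : G → ℂ :=
  fun g => (∑ x : G, if h : x * g * x⁻¹ ∈ H then ((lam ⟨x * g * x⁻¹, h⟩ : ℂˣ) : ℂ) else 0) /
    (Nat.card H : ℂ)

/-- A finite group is normally monomial if every irreducible complex character is induced
from a linear character of a normal subgroup. -/
def NormallyMonomial (G : Type) [Group G] [Fintype G] : Prop :=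
  ∀ V : FDRep ℂ G, Simple V → ∃ (H : Subgroup G) (lam : H →* ℂˣ),
    H.Normal ∧ FDRep.character V = indLinearChar H lam

/-- Elementary form of irreducibility. -/
def Irr {G V : Type} [Group G] [AddCommGroup V] [Module ℂ V] (ρ : Representation ℂ G V) : Prop :=
  Nontrivial V ∧ ∀ S : Submodule ℂ V, (∀ g, ∀ v ∈ S, ρ g v ∈ S) → S = ⊥ ∨ S = ⊤

lemma Irr.scalar {G V : Type} [Group G] [AddCommGroup V] [Module ℂ V] [FiniteDimensional ℂ V]
    {ρ : Representation ℂ G V} (h : Irr ρ) (f : V →ₗ[ℂ] V) (hf : ∀ g v, f (ρ g v) = ρ g (f v)) :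
    ∃ c : ℂ, f = c • LinearMap.id := by
  have := h.1
  obtain ⟨c, hc⟩ := Module.End.exists_eigenvalue f
  refine ⟨c, ?_⟩
  rcases h.2 (Module.End.eigenspace f c) (fun g v hv => by
    rw [Module.End.mem_eigenspace_iff] at hv ⊢
    rw [hf, hv, map_smul]) with h1 | h1
  · exact absurd h1 hc
  · ext v
    have : v ∈ Module.End.eigenspace f c := by rw [h1]; trivial
    rw [Module.End.mem_eigenspace_iff] at this
    simpa using this

lemma simple_of_irr {G : Type} [Group G] [Finite G] (V : FDRep ℂ G) (h : Irr V.ρ) : Simple V := by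
  have : NeZero (Nat.card G : ℂ) := ⟨by exact_mod_cast Nat.card_pos.ne'⟩
  rw [FDRep.simple_iff_end_is_rank_one]
  have := h.1
  have hne : (𝟙 V : V ⟶ V) ≠ 0 := by
    intro h0
    obtain ⟨v, hv⟩ := exists_ne (0 : V)
    apply hv
    have := congrArg (fun f : V ⟶ V => f.hom.hom.hom v) h0
    exact this
  rw [finrank_eq_one_iff_of_nonzero' _ hne]
  intro f
  obtain ⟨c, hc⟩ := h.scalar f.hom.hom.hom (fun g v => by
    have := congrArg (fun k => k.hom.hom v) (f.comm g)
    exact this)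
  refine ⟨c, ?_⟩
  ext v
  have := congrArg (fun k => k v) hc
  exact this.symm

lemma irr_of_simple {G : Type} [Group G] (V : FDRep ℂ G) (h : Simple V) : Irr V.ρ := by
  constructor
  · by_contra hn
    rw [not_nontrivial_iff_subsingleton] at hn
    apply id_nonzero V
    ext v
    exact Subsingleton.elim _ _
  · intro S hS
    let R : Subrepresentation V.ρ := ⟨S, fun g v hv => hS g v hv⟩
    let W : FDRep ℂ G := FDRep.of (V := S) R.toRepresentation
    let f : W ⟶ V := ⟨InducedCategory.homMk (ModuleCat.ofHom S.subtype), fun g => by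
      ext v; rfl⟩
    have : Mono f := by
      constructor
      intro U a b hab
      ext u
      have := congrArg (fun k : U ⟶ V => k.hom.hom.hom u) hab
      exact this
    by_cases h0 : f = 0
    · left
      rw [eq_bot_iff]
      intro v hv
      have := congrArg (fun k : W ⟶ V => k.hom.hom.hom ⟨v, hv⟩) h0
      exact this
    · right
      have := isIso_of_mono_of_nonzero h0
      rw [eq_top_iff]
      intro v _
      have h1 : inv f ≫ f = 𝟙 V := IsIso.inv_hom_id f
      have h2 := congrArg (fun k : V ⟶ V => k.hom.hom.hom v) h1
      have h3 : ((inv f).hom.hom.hom v : S).1 = v := h2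
      rw [← h3]
      exact ((inv f).hom.hom.hom v : S).2

lemma common_eigenvector {ι V : Type} [AddCommGroup V] [Module ℂ V] [FiniteDimensional ℂ V]
    [Nontrivial V] (f : ι → (V →ₗ[ℂ] V)) (hf : ∀ i j v, f i (f j v) = f j (f i v)) :
    ∃ v : V, v ≠ 0 ∧ ∀ i, ∃ c : ℂ, f i v = c • v := by
  obtain ⟨S, ⟨hS0, hS⟩, hmin⟩ := WellFounded.has_min (wellFounded_lt (α := Submodule ℂ V))
    {S | S ≠ ⊥ ∧ ∀ i, ∀ v ∈ S, f i v ∈ S} ⟨⊤, by simp⟩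
  obtain ⟨v, hv, hv0⟩ := S.ne_bot_iff.1 hS0
  refine ⟨v, hv0, fun i => ?_⟩
  have : Nontrivial S := S.nontrivial_iff_ne_bot.2 hS0
  obtain ⟨c, hc⟩ := Module.End.exists_eigenvalue ((f i).restrict (hS i))
  obtain ⟨w, hw⟩ := hc.exists_hasEigenvector
  have hw1 : f i w = c • (w : V) := congrArg Subtype.val hw.apply_eq_smul
  have hE : S ⊓ Module.End.eigenspace (f i) c = S := by
    by_contra hne
    refine hmin (S ⊓ Module.End.eigenspace (f i) c) ⟨?_, ?_⟩ (lt_of_le_of_ne inf_le_left hne)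
    · rw [Submodule.ne_bot_iff]
      exact ⟨w, ⟨w.2, Module.End.mem_eigenspace_iff.2 hw1⟩, fun h => hw.2 (Subtype.ext h)⟩
    · rintro j u ⟨hu1, hu2⟩
      refine ⟨hS j u hu1, ?_⟩
      rw [SetLike.mem_coe, Module.End.mem_eigenspace_iff] at hu2 ⊢
      rw [hf, hu2, map_smul]
  rw [← hE] at hv
  exact ⟨c, Module.End.mem_eigenspace_iff.1 hv.2⟩

lemma Irr.finrank_le_index {G V : Type} [Group G] [Finite G] [AddCommGroup V] [Module ℂ V]
    [FiniteDimensional ℂ V] {ρ : Representation ℂ G V} (h : Irr ρ) (M : Subgroup G)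
    (hM : ∀ a ∈ M, ∀ b ∈ M, ρ (a * b) = ρ (b * a)) : Module.finrank ℂ V ≤ M.index := by
  have := h.1
  obtain ⟨v, hv0, hv⟩ := common_eigenvector (fun m : M => ρ m) (fun a b v => by
    have := congrArg (fun k => k v) (hM a a.2 b b.2)
    simpa using this)
  let e : G ⧸ M → V := fun q => ρ q.out v
  have key : ∀ g, ρ g v ∈ Submodule.span ℂ (Set.range e) := by
    intro g
    obtain ⟨m, hm⟩ := QuotientGroup.mk_out_eq_mul M g
    obtain ⟨c, hc⟩ := hv m⁻¹
    have : ρ g v = c • e (g : G ⧸ M) := by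
      have hg : g = (g : G ⧸ M).out * ((m⁻¹ : M) : G) := by rw [hm]; simp
      calc ρ g v = ρ ((g : G ⧸ M).out * ((m⁻¹ : M) : G)) v := by rw [← hg]
        _ = _ := by rw [map_mul, Module.End.mul_apply, hc, map_smul]
    rw [this]
    exact Submodule.smul_mem _ _ (Submodule.subset_span ⟨_, rfl⟩)
  have htop : Submodule.span ℂ (Set.range e) = ⊤ := by
    refine (h.2 _ ?_).resolve_left ?_
    · intro g w hw
      induction hw using Submodule.span_induction with
      | mem x hx =>
        obtain ⟨q, rfl⟩ := hx
        have := key (g * q.out)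
        simpa [e] using this
      | zero => simp
      | add x y _ _ hx hy => rw [map_add]; exact Submodule.add_mem _ hx hy
      | smul a x _ hx => rw [map_smul]; exact Submodule.smul_mem _ _ hx
    · rw [← ne_eq, Submodule.ne_bot_iff]
      exact ⟨v, by simpa using key 1, hv0⟩
  have := Fintype.ofFinite (G ⧸ M)
  have := finrank_range_le_card (R := ℂ) e
  rw [Set.finrank, htop, finrank_top] at this
  rwa [Subgroup.index, Nat.card_eq_fintype_card]

lemma exists_abelian_index {G V : Type} [Group G] [Finite G] [AddCommGroup V] [Module ℂ V]
    [FiniteDimensional ℂ V] (ρ : Representation ℂ G V) (p : ℕ) (hp : p.Prime)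
    (hdim : Module.finrank ℂ V = p) (x : G)
    (hx : ∀ g, ∃ c : ℂ, c ^ p = 1 ∧ ρ (g * x * g⁻¹) = c • ρ x)
    (g0 : G) (hg0 : ρ (g0 * x * g0⁻¹) ≠ ρ x) :
    ∃ M : Subgroup G, M.index ≤ p ∧ ∀ a ∈ M, ∀ b ∈ M, ρ (a * b) = ρ (b * a) := by
  have : Fact p.Prime := ⟨hp⟩
  have : Nontrivial V := Module.finrank_pos_iff.1 (hdim ▸ hp.pos)
  have hρ0 : ∀ g v, ρ g v = 0 → v = 0 := by
    intro g v h
    have : ρ g⁻¹ (ρ g v) = v := by rw [← Module.End.mul_apply, ← map_mul]; simp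
    rw [← this, h, map_zero]
  choose ζ hζ1 hζ using hx
  obtain ⟨w0, hw0⟩ := exists_ne (0 : V)
  have huniq : ∀ c d : ℂ, c • ρ x = d • ρ x → c = d := by
    intro c d h
    have h1 := congrArg (fun k => k w0) h
    simp only [LinearMap.smul_apply] at h1
    exact smul_left_injective ℂ (fun h0 => hw0 (hρ0 _ _ h0)) h1
  let Z : G →* ℂ :=
    { toFun := ζ
      map_one' := huniq _ _ (by rw [← hζ]; simp)
      map_mul' := by
        intro g h
        apply huniq
        have e : g * h * x * (g * h)⁻¹ = g * (h * x * h⁻¹) * g⁻¹ := by group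
        rw [← hζ, e, map_mul, map_mul, hζ h]
        have := hζ g
        rw [map_mul, map_mul] at this
        rw [mul_smul_comm, smul_mul_assoc, this, smul_smul, mul_comm] }
  let U : G →* ℂˣ := Z.toHomUnits
  have hU : ∀ g, ((U g : ℂˣ) : ℂ) = ζ g := fun g => rfl
  have hmem : ∀ g, g ∈ U.ker → ρ (g * x) = ρ (x * g) := by
    intro g hg
    have h1 : ζ g = 1 := by rw [← hU, MonoidHom.mem_ker.1 hg]; rfl
    have h2 := hζ g
    rw [h1, one_smul] at h2
    calc ρ (g * x) = ρ (g * x * g⁻¹) * ρ g := by rw [← map_mul]; simp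
      _ = _ := by rw [h2, map_mul]
  refine ⟨U.ker, ?_, ?_⟩
  · rw [Subgroup.index_ker]
    have hle : U.range ≤ rootsOfUnity p ℂ := by
      rintro _ ⟨g, rfl⟩
      rw [mem_rootsOfUnity']
      exact hζ1 g
    calc Nat.card U.range ≤ Nat.card (rootsOfUnity p ℂ) := Subgroup.card_le_of_le hle
      _ ≤ p := card_rootsOfUnity ℂ p
  · obtain ⟨μ, hμ⟩ := Module.End.exists_eigenvalue (ρ x)
    obtain ⟨v, hv⟩ := hμ.exists_hasEigenvector
    have hμ0 : μ ≠ 0 := by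
      rintro rfl
      have := hv.apply_eq_smul
      rw [zero_smul] at this
      exact hv.2 (hρ0 _ _ this)
    have hz1 : ζ g0⁻¹ ≠ 1 := by
      intro h
      have h2 : ζ g0 = 1 := by
        have := map_mul Z g0 g0⁻¹
        rw [mul_inv_cancel, map_one] at this
        change 1 = ζ g0 * ζ g0⁻¹ at this
        rw [h, mul_one] at this
        exact this.symm
      apply hg0
      rw [hζ, h2, one_smul]
    have hord : orderOf (ζ g0⁻¹) = p := orderOf_eq_prime (hζ1 _) hz1
    let b : Fin p → V := fun j => ρ (g0 ^ (j : ℕ)) v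
    let m : Fin p → ℂ := fun j => ζ g0⁻¹ ^ (j : ℕ) * μ
    have hminj : Function.Injective m := by
      intro i j hij
      have h1 := mul_right_cancel₀ hμ0 hij
      exact Fin.ext (pow_injOn_Iio_orderOf (by simp [hord]) (by simp [hord]) h1)
    have hb : ∀ j, ρ x (b j) = m j • b j := by
      intro j
      have e1 : ζ ((g0⁻¹) ^ (j : ℕ)) = ζ g0⁻¹ ^ (j : ℕ) := map_pow Z _ _
      have h1 := hζ ((g0⁻¹) ^ (j : ℕ))
      have e2 : x * g0 ^ (j : ℕ) = g0 ^ (j : ℕ) * ((g0⁻¹) ^ (j : ℕ) * x * ((g0⁻¹) ^ (j : ℕ))⁻¹) := by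
        simp [mul_assoc]
      have h2 : ρ x * ρ (g0 ^ (j : ℕ)) = ζ g0⁻¹ ^ (j : ℕ) • (ρ (g0 ^ (j : ℕ)) * ρ x) := by
        rw [← map_mul, e2, map_mul, h1, e1, mul_smul_comm]
      have h3 := congrArg (fun k => k v) h2
      simp only [Module.End.mul_apply, LinearMap.smul_apply] at h3
      rw [hv.apply_eq_smul, map_smul, smul_smul] at h3
      exact h3
    have hli : LinearIndependent ℂ b :=
      Module.End.eigenvectors_linearIndependent' (ρ x) m hminj b
        (fun j => ⟨Module.End.mem_eigenspace_iff.2 (hb j), fun h => hv.2 (hρ0 _ _ h)⟩)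
    have : Nonempty (Fin p) := ⟨⟨0, hp.pos⟩⟩
    let B := basisOfLinearIndependentOfCardEqFinrank hli (by simp [hdim])
    have hB : ∀ j, B j = b j := fun j => by simp [B]
    have hrepr : ∀ w i, B.repr (ρ x w) i = m i * B.repr w i := by
      intro w i
      have : (B.coord i) ∘ₗ (ρ x) = m i • B.coord i := by
        apply B.ext
        intro j
        simp only [LinearMap.comp_apply, hB, hb, map_smul, LinearMap.smul_apply]
        rw [← hB, Module.Basis.coord_apply, Module.Basis.repr_self, Finsupp.single_apply]
        split_ifs with hij
        · rw [hij]
        · simp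
      exact congrArg (fun k => k w) this
    have hdiag : ∀ a ∈ U.ker, ∀ j, ∃ c : ℂ, ρ a (b j) = c • b j := by
      intro a ha j
      refine ⟨B.repr (ρ a (b j)) j, ?_⟩
      have h1 : ρ x (ρ a (b j)) = m j • ρ a (b j) := by
        rw [← Module.End.mul_apply, ← map_mul, ← hmem a ha, map_mul, Module.End.mul_apply, hb,
          map_smul]
      apply B.repr.injective
      ext i
      rw [map_smul, ← hB, Module.Basis.repr_self, Finsupp.smul_apply, Finsupp.single_apply]
      split_ifs with hij
      · rw [hij]; simp
      · have h2 := hrepr (ρ a (b j)) i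
        rw [h1, map_smul, Finsupp.smul_apply, smul_eq_mul] at h2
        have h3 : (m j - m i) * B.repr (ρ a (b j)) i = 0 := by rw [sub_mul, h2, sub_self]
        rcases mul_eq_zero.1 h3 with h4 | h4
        · exact absurd (hminj (sub_eq_zero.1 h4)) hij
        · rw [hB, h4]; simp
    intro a ha c hc
    apply B.ext
    intro j
    obtain ⟨s, hs⟩ := hdiag a ha j
    obtain ⟨t, ht⟩ := hdiag c hc j
    rw [hB, map_mul, map_mul, Module.End.mul_apply, Module.End.mul_apply, hs, ht, map_smul,
      map_smul, hs, ht, smul_comm]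

lemma exists_irr {G : Type} [Group G] [Finite G] (N : Subgroup G) [N.Normal] (g : G)
    (hg : g ∉ N) : ∃ V : FDRep ℂ G, Simple V ∧ N ≤ repKer V ∧ g ∉ repKer V := by
  classical
  have : NeZero (Nat.card G : ℂ) := ⟨by exact_mod_cast Nat.card_pos.ne'⟩
  have := Fintype.ofFinite (G ⧸ N)
  let ρ : Representation ℂ G (G ⧸ N → ℂ) :=
    { toFun := fun a => LinearMap.funLeft ℂ ℂ (fun q => a⁻¹ • q)
      map_one' := by ext; simp [LinearMap.funLeft]
      map_mul' := fun a b => by ext; simp [LinearMap.funLeft, mul_smul] }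
  have hρ : ∀ a f q, ρ a f q = f (a⁻¹ • q) := fun a f q => rfl
  obtain ⟨S, ⟨v, hvS, hv⟩, hmin⟩ := WellFounded.has_min
    ((InvImage.wf (fun S : Subrepresentation ρ => S.toSubmodule)
      (wellFounded_lt (α := Submodule ℂ (G ⧸ N → ℂ)))))
    {S : Subrepresentation ρ | ∃ v ∈ S.toSubmodule, ρ g v ≠ v}
    ⟨⊤, fun q => if q = ((1 : G) : G ⧸ N) then 1 else 0, by trivial, by
      intro h
      have h1 := congrFun h ((1 : G) : G ⧸ N)
      rw [hρ, MulAction.Quotient.smul_mk] at h1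
      simp only [smul_eq_mul, mul_one, if_true, ite_eq_left_iff, zero_ne_one, imp_false,
        not_not] at h1
      rw [QuotientGroup.eq] at h1
      simp at h1
      exact hg h1⟩
  have hN : ∀ n ∈ N, ρ n = 1 := by
    intro n hn
    apply LinearMap.ext
    intro f
    funext q
    rw [hρ]
    induction q using QuotientGroup.induction_on with
    | H a =>
      have : n⁻¹ • (a : G ⧸ N) = a := by
        rw [MulAction.Quotient.smul_mk, QuotientGroup.eq]
        have := ‹N.Normal›.conj_mem _ hn a⁻¹
        simpa [mul_assoc] using this
      rw [this]; rfl
  have hmem : ∀ {W : Type} [AddCommGroup W] [Module ℂ W] [FiniteDimensional ℂ W]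
      (σ : Representation ℂ G W) (a : G), a ∈ repKer (FDRep.of σ) ↔ σ a = 1 := by
    intro W _ _ _ σ a
    rw [repKer, MonoidHom.mem_ker, Units.ext_iff, Representation.asGroupHom_apply]
    rfl
  refine ⟨FDRep.of (V := S.toSubmodule) S.toRepresentation, simple_of_irr _ ⟨?_, ?_⟩, ?_, ?_⟩
  · refine ⟨⟨v, hvS⟩, 0, fun h => hv ?_⟩
    have : v = 0 := congrArg Subtype.val h
    rw [this, map_zero]
  · intro T hT
    by_contra hcon
    push Not at hcon
    obtain ⟨hT0, hT1⟩ := hcon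
    let T' : Subrepresentation ρ := ⟨T.map S.toSubmodule.subtype, by
      rintro a _ ⟨t, ht, rfl⟩
      exact ⟨_, hT a t ht, rfl⟩⟩
    obtain ⟨C, hC⟩ := exists_isCompl T'
    have hTS : T' ≤ S := by
      rintro _ ⟨t, ht, rfl⟩
      exact t.2
    have h1 : ∀ R : Subrepresentation ρ, R.toSubmodule < S.toSubmodule →
        ∀ v ∈ R.toSubmodule, ρ g v = v := by
      intro R hR u hu
      by_contra hne
      exact hmin R ⟨u, hu, hne⟩ hR
    have hT'lt : T'.toSubmodule < S.toSubmodule := by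
      refine lt_of_le_of_ne hTS fun h => hT1 ?_
      rw [eq_top_iff]
      rintro ⟨s, hs⟩ _
      rw [← h] at hs
      obtain ⟨t, ht, hts⟩ := hs
      have : t = ⟨s, ‹_›⟩ := Subtype.ext hts
      rw [← this]; exact ht
    have hC'lt : (C ⊓ S).toSubmodule < S.toSubmodule := by
      refine lt_of_le_of_ne inf_le_right fun h => hT0 ?_
      rw [eq_bot_iff]
      intro t ht
      have h2 : (t : G ⧸ N → ℂ) ∈ (C ⊓ S).toSubmodule := by rw [h]; exact t.2
      have h3 : (t : G ⧸ N → ℂ) ∈ T' ⊓ C := ⟨⟨t, ht, rfl⟩, h2.1⟩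
      rw [hC.inf_eq_bot] at h3
      exact Subtype.ext h3
    have htop : v ∈ (T' ⊔ C).toSubmodule := by rw [hC.sup_eq_top]; trivial
    obtain ⟨y, hy, z, hz, hyz⟩ := Submodule.mem_sup.1 htop
    have hzS : z ∈ S.toSubmodule := by
      have : z = v - y := by rw [← hyz]; simp
      rw [this]
      exact Submodule.sub_mem _ hvS (hTS hy)
    apply hv
    rw [← hyz, map_add, h1 T' hT'lt y hy, h1 (C ⊓ S) hC'lt z ⟨hz, hzS⟩]
  · intro n hn
    rw [hmem]
    ext1 u
    apply Subtype.ext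
    change ρ n u = u
    rw [hN n hn]; rfl
  · rw [hmem]
    intro h
    apply hv
    have := congrArg (fun k => (k ⟨v, hvS⟩ : S.toSubmodule).1) h
    exact this

open scoped commutatorElement

lemma mem_repKer {G : Type} [Group G] (V : FDRep ℂ G) (a : G) : a ∈ repKer V ↔ V.ρ a = 1 := by
  rw [repKer, MonoidHom.mem_ker, Units.ext_iff, Representation.asGroupHom_apply]
  rfl

lemma rho_eq_iff {G : Type} [Group G] (V : FDRep ℂ G) (a b : G) :
    V.ρ a = V.ρ b ↔ a * b⁻¹ ∈ repKer V := by
  rw [repKer, MonoidHom.mem_ker, map_mul, map_inv, mul_inv_eq_one, Units.ext_iff,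
    Representation.asGroupHom_apply, Representation.asGroupHom_apply]

lemma repKer_normal {G : Type} [Group G] (V : FDRep ℂ G) : (repKer V).Normal := by
  unfold repKer; infer_instance

/-- Terms of the upper central series. -/
abbrev Zs (G : Type) [Group G] (i : ℕ) : Subgroup G := Subgroup.upperCentralSeries G i

lemma mem_Zs {G : Type} [Group G] {i : ℕ} {x : G} :
    x ∈ Zs G (i + 1) ↔ ∀ y : G, ⁅x, y⁆ ∈ Zs G i := Subgroup.mem_upperCentralSeries_succ_iff

lemma Zs_mono {G : Type} [Group G] {i j : ℕ} (h : i ≤ j) : Zs G i ≤ Zs G j :=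
  Subgroup.upperCentralSeries_mono G h

lemma nc1 {G : Type} [Group G] (k : ℕ) (h : IsCyclic (G ⧸ Zs G (k + 1))) : Zs G (k + 1) = ⊤ := by
  let f : G ⧸ Zs G k →* G ⧸ Zs G (k + 1) :=
    QuotientGroup.map _ _ (MonoidHom.id G) (Zs_mono (Nat.le_succ k))
  have hf : f.ker ≤ Subgroup.center _ := by
    intro q hq
    induction q using QuotientGroup.induction_on with
    | H a =>
      have ha : a ∈ Zs G (k + 1) := by
        have : ((a : G) : G ⧸ Zs G (k + 1)) = 1 := hq
        exact (QuotientGroup.eq_one_iff a).1 this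
      rw [Subgroup.mem_center_iff]
      intro r
      induction r using QuotientGroup.induction_on with
      | H b =>
        have h1 := mem_Zs.1 ha b
        rw [← QuotientGroup.eq_one_iff, commutatorElement_def] at h1
        have h2 : (a : G ⧸ Zs G k) * b * (a : G ⧸ Zs G k)⁻¹ * (b : G ⧸ Zs G k)⁻¹ = 1 := h1
        rw [mul_inv_eq_one, mul_inv_eq_iff_eq_mul] at h2
        exact h2.symm
  have hc := f.isMulCommutative_of_isCyclic_of_ker_le_center hf
  rw [eq_top_iff]
  intro a _
  rw [mem_Zs]
  intro b
  rw [← QuotientGroup.eq_one_iff, commutatorElement_def]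
  change (a : G ⧸ Zs G k) * b * (a : G ⧸ Zs G k)⁻¹ * (b : G ⧸ Zs G k)⁻¹ = 1
  rw [mul_inv_eq_one, mul_inv_eq_iff_eq_mul]
  exact hc.is_comm.comm _ _

lemma nc {G H : Type} [Group G] [Group H] (k : ℕ) (f : G →* H) (hc : IsCyclic f.range)
    (hf : f.ker ≤ Zs G (k + 1)) : Zs G (k + 1) = ⊤ := by
  apply nc1
  obtain ⟨⟨_, g, rfl⟩, hg⟩ := hc.exists_generator
  refine ⟨⟨(g : G ⧸ Zs G (k + 1)), fun q => ?_⟩⟩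
  induction q using QuotientGroup.induction_on with
  | H a =>
    obtain ⟨m, hm⟩ := Subgroup.mem_zpowers_iff.1 (hg ⟨f a, a, rfl⟩)
    have hm1 : f g ^ m = f a := congrArg Subtype.val hm
    refine Subgroup.mem_zpowers_iff.2 ⟨m, ?_⟩
    rw [← QuotientGroup.mk_zpow, QuotientGroup.eq]
    apply hf
    rw [MonoidHom.mem_ker, map_mul, map_inv, map_zpow, hm1, inv_mul_cancel]

section maxclass
variable {G : Type} [Group G] [Finite G] {p k : ℕ}

lemma Zs_strict (htop : Zs G (k + 2) = ⊤) (hne : Zs G (k + 1) ≠ ⊤) {i : ℕ} (hi : i ≤ k + 1) :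
    Zs G i < Zs G (i + 1) := by
  refine lt_of_le_of_ne (Zs_mono (Nat.le_succ i)) fun h => hne ?_
  have hst : ∀ j, Zs G (i + j) = Zs G i := by
    intro j
    induction j with
    | zero => rfl
    | succ j ih =>
      ext x
      rw [← add_assoc, mem_Zs, ih, ← mem_Zs, ← h]
  have h1 := hst (k + 1 - i)
  have h2 := hst (k + 2 - i)
  rw [show i + (k + 1 - i) = k + 1 by omega] at h1
  rw [show i + (k + 2 - i) = k + 2 by omega] at h2
  rw [h1, ← h2, htop]

lemma card_pow (hp : p.Prime) (hcard : Nat.card G = p ^ (k + 3)) (H : Subgroup G) :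
    ∃ e, e ≤ k + 3 ∧ Nat.card H = p ^ e := by
  have := Subgroup.card_subgroup_dvd_card H
  rw [hcard] at this
  exact (Nat.dvd_prime_pow hp).1 this

lemma card_lt {A B : Subgroup G} (h : A < B) : Nat.card A < Nat.card B := by
  refine lt_of_le_of_ne (Subgroup.card_le_of_le h.le) fun he => h.ne ?_
  exact Subgroup.eq_of_le_of_card_ge h.le he.ge

lemma card_Zs (hp : p.Prime) (hcard : Nat.card G = p ^ (k + 3)) (htop : Zs G (k + 2) = ⊤)
    (hne : Zs G (k + 1) ≠ ⊤) {i : ℕ} (hi : i ≤ k + 1) : Nat.card (Zs G i) = p ^ i := by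
  choose e he1 he using fun i => card_pow hp hcard (Zs G i)
  have hlt : ∀ i ≤ k + 1, e i < e (i + 1) := by
    intro i hi
    have := card_lt (Zs_strict htop hne hi)
    rw [he, he] at this
    exact (Nat.pow_lt_pow_iff_right hp.one_lt).1 this
  have hlow : ∀ i ≤ k + 2, i ≤ e i := by
    intro i
    induction i with
    | zero => intro _; exact Nat.zero_le _
    | succ i ih =>
      intro h
      have := ih (by omega)
      have := hlt i (by omega)
      omega
  have hk : e (k + 1) ≤ k + 1 := by
    have h1 := hlt (k + 1) le_rfl
    have h2 := he1 (k + 2)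
    by_contra hcon
    have h3 : e (k + 1) = k + 2 := by
      have : e (k + 1 + 1) = e (k + 2) := rfl
      omega
    apply hne
    apply nc1
    have : Fact p.Prime := ⟨hp⟩
    apply isCyclic_of_prime_card (p := p)
    have h4 := Subgroup.card_eq_card_quotient_mul_card_subgroup (Zs G (k + 1))
    rw [hcard, he, h3, pow_succ p (k + 2), mul_comm] at h4
    exact (Nat.eq_of_mul_eq_mul_right (pow_pos hp.pos _) h4).symm
  have hup : ∀ j, j ≤ k + 1 → e (k + 1 - j) ≤ k + 1 - j := by
    intro j
    induction j with
    | zero => intro _; exact hk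
    | succ j ih =>
      intro h
      have h1 := ih (by omega)
      have h2 := hlt (k + 1 - (j + 1)) (by omega)
      rw [show k + 1 - (j + 1) + 1 = k + 1 - j by omega] at h2
      omega
  have h1 := hup (k + 1 - i) (by omega)
  rw [show k + 1 - (k + 1 - i) = i by omega] at h1
  rw [he, le_antisymm h1 (hlow i (by omega))]

lemma Zs_le_normal (hp : p.Prime) (hcard : Nat.card G = p ^ (k + 3)) (htop : Zs G (k + 2) = ⊤)
    (hne : Zs G (k + 1) ≠ ⊤) (N : Subgroup G) (hN : N.Normal) (i : ℕ) (hi : i ≤ k + 1)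
    (hc : p ^ i ≤ Nat.card N) : Zs G i ≤ N := by
  induction i with
  | zero => exact bot_le
  | succ i ih =>
    have hZN := ih (by omega) (le_trans (Nat.pow_le_pow_right hp.pos (Nat.le_succ i)) hc)
    have hnot : ¬ N ≤ Zs G i := by
      intro h
      have h1 := Subgroup.card_le_of_le h
      rw [card_Zs hp hcard htop hne (by omega)] at h1
      exact absurd (lt_of_lt_of_le (Nat.pow_lt_pow_right hp.one_lt (Nat.lt_succ_self i)) hc)
        (not_lt.2 h1)
    have hex : ∃ j, ¬ (N ⊓ Zs G j ≤ Zs G i) := ⟨k + 2, by rwa [htop, inf_top_eq]⟩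
    classical
    have hj := Nat.find_spec hex
    have hmin := fun m => Nat.find_min (H := hex) (m := m)
    generalize Nat.find hex = j at hj hmin
    cases j with
    | zero => exact absurd (le_trans inf_le_right bot_le) hj
    | succ j =>
      have hm := not_not.1 (hmin j (Nat.lt_succ_self j))
      obtain ⟨x, ⟨hxN, hxZ⟩, hx⟩ := SetLike.not_le_iff_exists.1 hj
      have hx1 : x ∈ Zs G (i + 1) := by
        rw [mem_Zs]
        intro y
        apply hm
        refine ⟨?_, mem_Zs.1 hxZ y⟩
        rw [commutatorElement_def, mul_assoc, mul_assoc, ← mul_assoc y]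
        exact N.mul_mem hxN (hN.conj_mem _ (N.inv_mem hxN) y)
      have hlt : Zs G i < N ⊓ Zs G (i + 1) := by
        refine lt_of_le_of_ne (le_inf hZN (Zs_mono (Nat.le_succ i))) fun h => hx ?_
        rw [h]
        exact ⟨hxN, hx1⟩
      have hcl := card_lt hlt
      obtain ⟨e, -, he⟩ := card_pow hp hcard (N ⊓ Zs G (i + 1))
      rw [he, card_Zs hp hcard htop hne (by omega)] at hcl
      have h3 := (Nat.pow_lt_pow_iff_right hp.one_lt).1 hcl
      have h4 : N ⊓ Zs G (i + 1) = Zs G (i + 1) := by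
        apply Subgroup.eq_of_le_of_card_ge inf_le_right
        rw [he, card_Zs hp hcard htop hne hi]
        exact Nat.pow_le_pow_right hp.pos h3
      rw [← h4]
      exact inf_le_left

lemma normal_cases (hp : p.Prime) (hcard : Nat.card G = p ^ (k + 3)) (htop : Zs G (k + 2) = ⊤)
    (hne : Zs G (k + 1) ≠ ⊤) (N : Subgroup G) (hN : N.Normal) :
    (∃ i ≤ k, N = Zs G i) ∨ Zs G (k + 1) ≤ N := by
  obtain ⟨e, -, he⟩ := card_pow hp hcard N
  rcases Nat.lt_or_ge e (k + 1) with h | h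
  · left
    refine ⟨e, by omega, ?_⟩
    symm
    apply Subgroup.eq_of_le_of_card_ge
    · exact Zs_le_normal hp hcard htop hne N hN e (by omega) he.ge
    · rw [he, card_Zs hp hcard htop hne (by omega)]
  · right
    apply Zs_le_normal hp hcard htop hne N hN _ le_rfl
    rw [he]
    exact Nat.pow_le_pow_right hp.pos h

lemma finrank_one_of_le (htop : Zs G (k + 2) = ⊤) (V : FDRep ℂ G) (hV : Simple V)
    (hK : Zs G (k + 1) ≤ repKer V) : repDegree V = 1 := by
  have hI := irr_of_simple V hV
  have := hI.1
  have h1 := hI.finrank_le_index ⊤ (fun a _ b _ => by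
    rw [rho_eq_iff]
    apply hK
    have : a ∈ Zs G (k + 2) := by rw [htop]; trivial
    have := mem_Zs.1 this b
    rw [commutatorElement_def] at this
    simpa [mul_assoc] using this)
  rw [Subgroup.index_top] at h1
  have h2 : 0 < Module.finrank ℂ V := Module.finrank_pos
  exact le_antisymm h1 h2

/-- The kernel of a linear character has index at most `p`. -/
lemma linear_index (hne : Zs G (k + 1) ≠ ⊤) (V : FDRep ℂ G) (hd : repDegree V = 1) :
    ¬ repKer V ≤ Zs G (k + 1) := by
  intro hK
  apply hne
  have hd' : Module.finrank ℂ V = 1 := hd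
  have hsc : ∀ g : G, ∃ c : ℂ, ∀ v, V.ρ g v = c • v := by
    intro g
    obtain ⟨v, hv0, hv⟩ := finrank_eq_one_iff'.1 hd'
    obtain ⟨c, hc⟩ := hv (V.ρ g v)
    refine ⟨c, fun w => ?_⟩
    obtain ⟨d, rfl⟩ := hv w
    rw [map_smul, ← hc, smul_comm]
  choose c hc using hsc
  have : Nontrivial V := Module.finrank_pos_iff.1 (by rw [hd']; exact one_pos)
  obtain ⟨w, hw⟩ := exists_ne (0 : V)
  have hu : ∀ a b : ℂ, a • w = b • w → a = b := fun a b h => smul_left_injective ℂ hw h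
  let f : G →* ℂ :=
    { toFun := c
      map_one' := hu _ _ (by rw [← hc]; simp)
      map_mul' := fun a b => hu _ _ (by
        rw [← hc, map_mul, Module.End.mul_apply, hc b, hc a, smul_smul, mul_comm]) }
  apply nc k f.toHomUnits
  · have : Finite f.toHomUnits.range := Finite.of_surjective _ f.toHomUnits.rangeRestrict_surjective
    infer_instance
  · intro g hg
    apply hK
    rw [mem_repKer]
    have h1 : c g = 1 := by
      have := congrArg Units.val (MonoidHom.mem_ker.1 hg)
      exact this
    apply LinearMap.ext
    intro v
    rw [hc, h1, one_smul]; rfl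

/-- Degree `p` with kernel `Z i` forces all characters of the quotient to have degree `≤ p`. -/
lemma degree_le (hp : p.Prime) (hcard : Nat.card G = p ^ (k + 3)) (htop : Zs G (k + 2) = ⊤)
    (hne : Zs G (k + 1) ≠ ⊤) (V W : FDRep ℂ G) (hV : Simple V) (hW : Simple W) {i : ℕ}
    (hi : i ≤ k) (hK : repKer V = Zs G i) (hd : repDegree V = p) (hKW : Zs G i ≤ repKer W) :
    repDegree W ≤ p := by
  have hI := irr_of_simple V hV
  have := hI.1
  obtain ⟨x, hx2, hx1⟩ := SetLike.exists_of_lt (Zs_strict htop hne (i := i + 1) (by omega))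
  have hscal : ∀ z ∈ Zs G (i + 1), ∃ c : ℂ, c ^ p = 1 ∧ V.ρ z = c • LinearMap.id := by
    intro z hz
    obtain ⟨c, hc⟩ := hI.scalar (V.ρ z) (fun g v => by
      have : V.ρ (z * g) = V.ρ (g * z) := by
        rw [rho_eq_iff, hK]
        have := mem_Zs.1 hz g
        rw [commutatorElement_def] at this
        simpa [mul_assoc] using this
      have := congrArg (fun q => q v) this
      simpa using this)
    refine ⟨c, ?_, hc⟩
    have hrel : (Zs G i).relIndex (Zs G (i + 1)) = p := by
      have h1 := Subgroup.relIndex_mul_relIndex ⊥ _ _ bot_le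
        (Zs_mono (G := G) (Nat.le_succ i))
      rw [Subgroup.relIndex_bot_left, Subgroup.relIndex_bot_left] at h1
      rw [card_Zs hp hcard htop hne (by omega), card_Zs hp hcard htop hne (by omega),
        pow_succ] at h1
      exact Nat.eq_of_mul_eq_mul_left (pow_pos hp.pos _) h1
    have hzp := Subgroup.pow_relIndex_mem (Zs G i) hz
    rw [hrel, ← hK, mem_repKer, map_pow, hc] at hzp
    obtain ⟨w, hw⟩ := exists_ne (0 : V)
    have h2 := congrArg (fun q => q w) hzp
    have h3 : ((c • (LinearMap.id : V →ₗ[ℂ] V)) ^ p) w = c ^ p • w := by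
      have : (c • (LinearMap.id : V →ₗ[ℂ] V)) ^ p = c ^ p • (1 : V →ₗ[ℂ] V) := by
        change (c • (1 : Module.End ℂ V)) ^ p = c ^ p • (1 : Module.End ℂ V)
        rw [smul_pow, one_pow]
      rw [this]; rfl
    have h4 : c ^ p • w = (1 : ℂ) • w := by
      rw [← h3, one_smul]; exact h2
    exact smul_left_injective ℂ hw h4
  have hy : ∃ y, ⁅x, y⁆ ∉ Zs G i := by
    by_contra hcon
    push Not at hcon
    exact hx1 (mem_Zs.2 hcon)
  obtain ⟨y, hy⟩ := hy
  obtain ⟨M, hM, hab⟩ := exists_abelian_index V.ρ p hp hd x (fun g => by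
      have hz : g * x * g⁻¹ * x⁻¹ ∈ Zs G (i + 1) := by
        have := (Zs G (i + 1)).inv_mem (mem_Zs.1 hx2 g)
        rwa [commutatorElement_inv, commutatorElement_def] at this
      obtain ⟨c, hc1, hc⟩ := hscal _ hz
      refine ⟨c, hc1, ?_⟩
      have e : g * x * g⁻¹ = (g * x * g⁻¹ * x⁻¹) * x := by simp
      rw [e, map_mul, hc]
      ext v
      simp) y (fun h => hy (by
      rw [eq_comm, rho_eq_iff, hK] at h
      rw [commutatorElement_def]
      simpa [mul_assoc] using h))
  refine le_trans ((irr_of_simple W hW).finrank_le_index M ?_) hM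
  intro a ha b hb
  rw [rho_eq_iff]
  apply hKW
  rw [← hK, ← rho_eq_iff]
  exact hab a ha b hb

/-- There is an irreducible character with kernel exactly `Z i`. -/
lemma exists_ker_eq (hp : p.Prime) (hcard : Nat.card G = p ^ (k + 3)) (htop : Zs G (k + 2) = ⊤)
    (hne : Zs G (k + 1) ≠ ⊤) {i : ℕ} (hi : i ≤ k) :
    ∃ V : FDRep ℂ G, Simple V ∧ repKer V = Zs G i := by
  obtain ⟨g, hg1, hg0⟩ := SetLike.exists_of_lt (Zs_strict htop hne (i := i) (by omega))
  obtain ⟨V, hV, hle, hgV⟩ := exists_irr (Zs G i) g hg0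
  refine ⟨V, hV, ?_⟩
  rcases normal_cases hp hcard htop hne _ (repKer_normal V) with ⟨j, hj, h⟩ | h
  · rw [h]
    have : j = i := by
      rcases lt_trichotomy j i with h1 | h1 | h1
      · exfalso
        rw [h] at hle
        have h2 := Zs_strict htop hne (i := j) (by omega)
        exact absurd (lt_of_lt_of_le h2 (Zs_mono h1)) (not_lt_of_ge hle)
      · exact h1
      · exfalso
        apply hgV
        rw [h]
        exact Zs_mono (by omega) hg1
    rw [this]
  · exact absurd (h (Zs_mono (by omega) hg1)) hgV

end maxclass

/-- Theorem B: a maximal class `p`-group of order `p^n` with `cd(G) = {1, p, p^b}` has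
`cod(G) = {p^i | 0 ≤ i ≤ c}` for some `n - b ≤ c ≤ n - 2`. -/
theorem maximal_class_three_degrees (p n b : ℕ) (hp : p.Prime) (G : Type) [Group G] [Fintype G]
    (hcard : Fintype.card G = p ^ n) (hb : 2 ≤ b) (hmax : nilClass G = n - 1)
    (hcd : cdSet G = {1, p, p ^ b}) :
    ∃ c : ℕ, n - b ≤ c ∧ c ≤ n - 2 ∧ codSet G = {m | ∃ i ≤ c, m = p ^ i} := by
  have hcard' : Nat.card G = p ^ n := by rw [Nat.card_eq_fintype_card, hcard]
  have : Fact p.Prime := ⟨hp⟩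
  have hnil : Group.IsNilpotent G := (IsPGroup.of_card hcard').isNilpotent
  have hnon : {m | Zs G m = ⊤}.Nonempty := Group.IsNilpotent.nilpotent G
  have hmax' : sInf {m | Zs G m = ⊤} = n - 1 := hmax
  have hZtop : Zs G (n - 1) = ⊤ := by
    have := Nat.sInf_mem hnon
    rw [hmax'] at this
    exact this
  have hZne : ∀ m, m < n - 1 → Zs G m ≠ ⊤ := by
    intro m hm h
    have := Nat.sInf_le (s := {m | Zs G m = ⊤}) h
    omega
  obtain ⟨Vp, hVp, hVpd⟩ : p ∈ cdSet G := by rw [hcd]; simp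
  obtain ⟨Vb, hVb, hVbd⟩ : p ^ b ∈ cdSet G := by rw [hcd]; simp
  have hn : 3 ≤ n := by
    by_contra hlt
    have h1 : Zs G 1 = ⊤ := by
      rw [eq_top_iff, ← hZtop]
      exact Zs_mono (by omega)
    have h2 := (irr_of_simple Vp hVp).finrank_le_index ⊤ (fun a _ b _ => by
      have : a ∈ Zs G (0 + 1) := by rw [zero_add, h1]; trivial
      have h3 : ⁅a, b⁆ = 1 := mem_Zs.1 this b
      rw [commutatorElement_def, mul_inv_eq_one, mul_inv_eq_iff_eq_mul] at h3
      rw [h3])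
    rw [Subgroup.index_top] at h2
    have h4 : Module.finrank ℂ Vp = p := hVpd
    have := hp.two_le
    omega
  obtain ⟨k, rfl⟩ : ∃ k, n = k + 3 := ⟨n - 3, by omega⟩
  have htop : Zs G (k + 2) = ⊤ := hZtop
  have hne : Zs G (k + 1) ≠ ⊤ := hZne _ (by omega)
  have hp1 := hp.one_lt
  have hpb : p < p ^ b := by
    calc p = p ^ 1 := (pow_one p).symm
      _ < p ^ b := Nat.pow_lt_pow_right hp1 (by omega)
  have hidx : ∀ (H : Subgroup G) (e : ℕ), e ≤ k + 3 → Nat.card H = p ^ e →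
      H.index = p ^ (k + 3 - e) := by
    intro H e he h
    have h1 := H.card_mul_index
    rw [h, hcard', show p ^ (k + 3) = p ^ e * p ^ (k + 3 - e) by rw [← pow_add]; congr 1; omega]
      at h1
    exact Nat.eq_of_mul_eq_mul_left (pow_pos hp.pos _) h1
  have hidxZ : ∀ i ≤ k, (Zs G i).index = p ^ (k + 3 - i) := fun i hi =>
    hidx _ i (by omega) (card_Zs hp hcard' htop hne (by omega))
  have hdeg : ∀ V : FDRep ℂ G, Simple V → repDegree V = 1 ∨ repDegree V = p ∨
      repDegree V = p ^ b := by
    intro V hV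
    have : repDegree V ∈ cdSet G := ⟨V, hV, rfl⟩
    rw [hcd] at this
    exact this
  -- linear characters
  have hlin : ∀ V : FDRep ℂ G, repDegree V = 1 → codegree V = 1 ∨ codegree V = p := by
    intro V hd
    have h1 := linear_index hne V hd
    obtain ⟨e, he1, he⟩ := card_pow hp hcard' (repKer V)
    have h2 : Zs G (k + 1) < repKer V := by
      rcases normal_cases hp hcard' htop hne _ (repKer_normal V) with ⟨j, hj, h⟩ | h
      · exact absurd (h ▸ Zs_mono (by omega)) h1
      · exact lt_iff_le_not_ge.2 ⟨h, h1⟩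
    have h3 := card_lt h2
    rw [he, card_Zs hp hcard' htop hne le_rfl] at h3
    have h4 := (Nat.pow_lt_pow_iff_right hp1).1 h3
    rw [codegree, hd, Nat.div_one, hidx _ e he1 he]
    obtain h5 | h5 : k + 3 - e = 0 ∨ k + 3 - e = 1 := by omega
    · left; rw [h5, pow_zero]
    · right; rw [h5, pow_one]
  have hnl : ∀ V : FDRep ℂ G, Simple V → repDegree V ≠ 1 → ∃ i ≤ k, repKer V = Zs G i := by
    intro V hV hd
    rcases normal_cases hp hcard' htop hne _ (repKer_normal V) with h | h
    · exact h
    · exact absurd (finrank_one_of_le htop V hV h) hd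
  let P : ℕ → Prop := fun i => i ≤ k ∧ ∃ V : FDRep ℂ G, Simple V ∧ repKer V = Zs G i ∧
    repDegree V = p
  let Q : ℕ → Prop := fun i => i ≤ k ∧ ∃ V : FDRep ℂ G, Simple V ∧ repKer V = Zs G i ∧
    repDegree V = p ^ b
  have hPQ : ∀ i ≤ k, P i ∨ Q i := by
    intro i hi
    obtain ⟨V, hV, hK⟩ := exists_ker_eq hp hcard' htop hne hi
    rcases hdeg V hV with h | h | h
    · exact absurd (hK ▸ Zs_mono (by omega)) (linear_index hne V h)
    · exact Or.inl ⟨hi, V, hV, hK, h⟩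
    · exact Or.inr ⟨hi, V, hV, hK, h⟩
  have hPnQ : ∀ i j, i ≤ j → P i → ¬ Q j := by
    rintro i j hij ⟨hi, V, hV, hVK, hVd⟩ ⟨hj, W, hW, hWK, hWd⟩
    have := degree_le hp hcard' htop hne V W hV hW hi hVK hVd (hWK ▸ Zs_mono hij)
    omega
  have hexP : ∃ i, P i := by
    obtain ⟨i, hi, h⟩ := hnl Vp hVp (by omega)
    exact ⟨i, hi, Vp, hVp, h, hVpd⟩
  obtain ⟨jb, hQb⟩ : ∃ i, Q i := by
    obtain ⟨i, hi, h⟩ := hnl Vb hVb (by omega)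
    exact ⟨i, hi, Vb, hVb, h, hVbd⟩
  obtain ⟨a, hPa, hmin⟩ : ∃ a, P a ∧ ∀ i, P i → a ≤ i := by
    classical
    exact ⟨Nat.find hexP, Nat.find_spec hexP, fun i hi => Nat.find_min' hexP hi⟩
  have ha : a ≤ k := hPa.1
  have ha1 : 1 ≤ a := by
    by_contra h
    exact hPnQ a jb (by omega) hPa hQb
  have hdivp : ∀ i ≤ k, p ^ (k + 3 - i) / p = p ^ (k + 2 - i) := by
    intro i hi
    rw [show k + 3 - i = (k + 2 - i) + 1 by omega, pow_succ, Nat.mul_div_cancel _ hp.pos]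
  refine ⟨max (k + 2 - a) (k + 3 - b), le_max_right _ _, ?_, ?_⟩
  · apply max_le <;> omega
  ext m
  constructor
  · rintro ⟨V, hV, rfl⟩
    rcases hdeg V hV with hd | hd | hd
    · rcases hlin V hd with h | h
      · exact ⟨0, Nat.zero_le _, by rw [h, pow_zero]⟩
      · exact ⟨1, le_trans (by omega) (le_max_left _ _), by rw [h, pow_one]⟩
    · obtain ⟨i, hi, hK⟩ := hnl V hV (by omega)
      have hai := hmin i ⟨hi, V, hV, hK, hd⟩
      refine ⟨k + 2 - i, le_trans (by omega) (le_max_left _ _), ?_⟩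
      rw [codegree, hK, hd, hidxZ i hi, hdivp i hi]
    · obtain ⟨i, hi, hK⟩ := hnl V hV (by omega)
      have hle := (irr_of_simple V hV).finrank_le_index (repKer V) (fun x hx y hy => by
        rw [(mem_repKer V _).1 ((repKer V).mul_mem hx hy),
          (mem_repKer V _).1 ((repKer V).mul_mem hy hx)])
      have hd' : Module.finrank ℂ V = p ^ b := hd
      rw [hd', hK, hidxZ i hi] at hle
      have hbi := (Nat.pow_le_pow_iff_right hp1).1 hle
      refine ⟨k + 3 - i - b, le_trans (by omega) (le_max_right _ _), ?_⟩
      rw [codegree, hK, hd, hidxZ i hi, Nat.pow_div hbi hp.pos]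
  · rintro ⟨e, he, rfl⟩
    -- a linear character with codegree p
    obtain ⟨g, -, hg⟩ := SetLike.exists_of_lt (lt_top_iff_ne_top.2 hne)
    obtain ⟨L, hL, hLK, hLg⟩ := exists_irr (Zs G (k + 1)) g hg
    have hLd := finrank_one_of_le htop L hL hLK
    rcases Nat.lt_or_ge e 2 with h2 | h2
    · obtain rfl | rfl : e = 0 ∨ e = 1 := by omega
      · let T : FDRep ℂ G := FDRep.of (Representation.trivial ℂ G ℂ)
        have hTd : repDegree T = 1 := Module.finrank_self ℂ
        have hTK : repKer T = ⊤ := by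
          rw [eq_top_iff]
          intro x _
          rw [mem_repKer]
          rfl
        refine ⟨T, simple_of_irr T ⟨?_, ?_⟩, ?_⟩
        · change Nontrivial ℂ
          infer_instance
        · intro S _
          exact eq_bot_or_eq_top (α := Submodule ℂ ℂ) S
        · rw [codegree, hTd, hTK, Subgroup.index_top, pow_zero, Nat.div_one]
      · refine ⟨L, hL, ?_⟩
        rw [pow_one]
        refine (hlin L hLd).resolve_left fun h => hLg ?_
        rw [codegree, hLd, Nat.div_one, Subgroup.index_eq_one] at h
        rw [h]; trivial
    · rcases Nat.lt_or_ge (k + 2 - a) e with h3 | h3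
      · have h4 : e ≤ k + 3 - b := (le_max_iff.1 he).resolve_left (by omega)
        have hi : k + 3 - b - e ≤ k := by omega
        obtain ⟨-, V, hV, hK, hd⟩ := (hPQ (k + 3 - b - e) hi).resolve_left
          (fun h => by have := hmin _ h; omega)
        refine ⟨V, hV, ?_⟩
        rw [codegree, hK, hd, hidxZ _ hi, Nat.pow_div (by omega) hp.pos]
        congr 1; omega
      · have hi : k + 2 - e ≤ k := by omega
        obtain ⟨-, V, hV, hK, hd⟩ := (hPQ (k + 2 - e) hi).resolve_right
          (hPnQ a _ (by omega) hPa)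
        refine ⟨V, hV, ?_⟩
        rw [codegree, hK, hd, hidxZ _ hi, hdivp _ hi]
        congr 1; omega
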